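/- arXiv:2107.01335 — 2 statements merged into one kernel-verified Lean document; each statement's English description precedes it below -/
import Mathlib

section
/- Let f(n,k) denote the minimum number of cliques, each on at most k vertices, needed to partition the edge set of the complete graph K_n (i.e., the minimum m such that there is a family B_1, …, B_m of subsets of the vertex set, each of size at most k, with the property that every unordered pair of distinct vertices is contained in exactly one B_i). There exist absolute constants c, C > 0 such that for all integers n > k ≥ 2, c · max{(n/k)^2, n} ≤ f(n,k) ≤ C · max{(n/k)^2, n}. -/
/-!
Write `f(n, k)` for `minCliquePartition n k`.

*Lower bound* (with constant `1`). Counting ordered pairs of distinct vertices gives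
`n (n - 1) ≤ m k (k - 1)` for any partition into `m` blocks, hence `(n / k) ^ 2 ≤ m` because
`k ≤ n`. Since no block is the whole vertex set, the blocks with at least two vertices are the
lines of a nondegenerate linear space, and the de Bruijn–Erdős theorem
(`Configuration.HasLines.card_le`) gives `n ≤ m`.

*Upper bound*. For a prime `p` and `t ≤ p`, the graphs of the `p ^ 2` affine functions over
`ZMod p`, restricted to the columns `0, …, t - 1`, cover each pair of points of
`Fin t × ZMod p` lying in distinct columns exactly once (a transversal design). Partitioning each
of the `t` columns recursively gives `f(n, k) ≤ p ^ 2 + t * f(p, k)` whenever `t ≤ k`, `t ≤ p` and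
`n ≤ t * p` (`CliquePartition.step`). Bertrand's postulate supplies the primes.

* If `16 n ≤ k ^ 2`, a prime `p` of order `√n` with `p ≤ k` and `t = p` give `f(n, k) ≤ 32 n`.
* If `16 n > k ^ 2` and `k` is large, a prime `p` of order `n / k` and `t = k` give a recursion in
  which the column term is smaller than `(n / k) ^ 2` by a factor of order `1 / k`, so that
  induction on `n` yields `f(n, k) ≤ C (n / k) ^ 2`.
* If `k` is bounded, the partition into single edges suffices.
-/

/-- `minCliquePartition n k` is the minimum number `m` of cliques, each on at most `k`
vertices, needed to partition the edge set of the complete graph `K_n`: the minimum `m`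
such that there are vertex subsets `B 0, …, B (m-1)`, each of size at most `k`, with every
unordered pair of distinct vertices contained in exactly one `B i`. -/
noncomputable def minCliquePartition (n k : ℕ) : ℕ :=
  sInf { m : ℕ | ∃ B : Fin m → Finset (Fin n),
    (∀ i, (B i).card ≤ k) ∧
    ∀ p : Finset (Fin n), p.card = 2 → ∃! i, p ⊆ B i }

/-- `CliquePartition α k m`: the edges of the complete graph on `α` can be partitioned into at most
`m` cliques with at most `k` vertices each. The blocks are indexed by an arbitrary finite type, so
empty and one-point blocks, possibly repeated, are allowed. -/
def CliquePartition (α : Type) (k m : ℕ) : Prop :=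
  ∃ (ι : Type) (_ : Fintype ι) (B : ι → Set α), Fintype.card ι ≤ m ∧ (∀ i, (B i).ncard ≤ k) ∧
    ∀ x y : α, x ≠ y → ∃! i, x ∈ B i ∧ y ∈ B i

namespace CliquePartition

theorem comap {α β : Type} [Finite β] {k m : ℕ} (h : CliquePartition β k m) (f : α → β)
    (hf : Function.Injective f) : CliquePartition α k m := by
  obtain ⟨ι, _, B, hm, hk, hB⟩ := h
  refine ⟨ι, inferInstance, fun i => f ⁻¹' B i, hm, fun i => ?_, fun x y hxy => ?_⟩
  · refine le_trans ?_ (hk i)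
    rw [← Set.ncard_image_of_injective _ hf]
    exact Set.ncard_le_ncard (Set.image_preimage_subset _ _) (Set.toFinite _)
  · exact hB (f x) (f y) (fun h => hxy (hf h))

theorem single {n k : ℕ} (h : n ≤ k) : CliquePartition (Fin n) k 1 := by
  refine ⟨Unit, inferInstance, fun _ => Set.univ, by simp, fun _ => ?_, fun x y _ => ?_⟩
  · simpa [Set.ncard_univ] using h
  · exact ⟨(), by simp, by simp⟩

theorem edges (n : ℕ) {k : ℕ} (hk : 2 ≤ k) : CliquePartition (Fin n) k (n * n) := by
  refine ⟨{e : Fin n × Fin n // e.1 < e.2}, inferInstance, fun e => {e.1.1, e.1.2}, ?_,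
    fun e => le_trans ((Set.ncard_insert_le _ _).trans (by simp)) hk, fun x y hxy => ?_⟩
  · refine (Fintype.card_subtype_le _).trans (by simp)
  · rcases lt_or_gt_of_ne hxy with h | h
    · refine ⟨⟨(x, y), h⟩, by simp, ?_⟩
      rintro ⟨⟨a, b⟩, hab⟩ ⟨h1, h2⟩
      simp at h1 h2 hab ⊢
      grind
    · refine ⟨⟨(y, x), h⟩, by simp, ?_⟩
      rintro ⟨⟨a, b⟩, hab⟩ ⟨h1, h2⟩
      simp at h1 h2 hab ⊢
      grind

/-- The transversal design on `t` columns of prime size `p`, with each column partitioned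
separately. -/
theorem transversal {p t k M : ℕ} [hp : Fact p.Prime] (htp : t ≤ p) (htk : t ≤ k)
    (h : CliquePartition (ZMod p) k M) :
    CliquePartition (Fin t × ZMod p) k (p ^ 2 + t * M) := by
  obtain ⟨ι, _, B, hm, hk, hB⟩ := h
  refine ⟨(ZMod p × ZMod p) ⊕ (Fin t × ι), inferInstance,
    Sum.elim (fun c => {z | z.2 = c.1 + c.2 * ((z.1 : ℕ) : ZMod p)})
      (fun c => {z | z.1 = c.1 ∧ z.2 ∈ B c.2}), ?_, ?_, ?_⟩
  · simp only [Fintype.card_sum, Fintype.card_prod, ZMod.card, Fintype.card_fin]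
    nlinarith [Nat.mul_le_mul_left t hm]
  · rintro (⟨a, b⟩ | ⟨i, j⟩)
    · refine le_trans ?_ htk
      have := Set.ncard_le_ncard_of_injOn (s := {z : Fin t × ZMod p |
        z.2 = a + b * ((z.1 : ℕ) : ZMod p)}) (t := (Set.univ : Set (Fin t))) Prod.fst
        (fun _ _ => Set.mem_univ _) (by
          rintro ⟨x, y⟩ hx ⟨x', y'⟩ hx' hxx
          simp at hx hx' hxx
          subst hxx
          simp [hx, hx']) (Set.toFinite _)
      simpa [Set.ncard_univ] using this
    · refine le_trans ?_ (hk j)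
      refine Set.ncard_le_ncard_of_injOn Prod.snd (fun z hz => hz.2) ?_ (Set.toFinite _)
      rintro ⟨x, y⟩ hx ⟨x', y'⟩ hx' hxx
      simp at hx hx' hxx
      simp [hx, hx', hxx]
  · rintro ⟨x, y⟩ ⟨x', y'⟩ hne
    by_cases hx : x = x'
    · subst hx
      have hy : y ≠ y' := fun h => hne (by rw [h])
      obtain ⟨j, hj, hu⟩ := hB y y' hy
      refine ⟨Sum.inr (x, j), by simpa using hj, ?_⟩
      rintro (⟨a, b⟩ | ⟨i, j'⟩) hz
      · simp at hz
        exact absurd (hz.1.trans hz.2.symm) hy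
      · simp at hz
        have := hu j' ⟨hz.1.2, hz.2.2⟩
        simp [this, hz.1.1]
    · -- Distinct columns have distinct residues because `t ≤ p`.
      have hd : ((x : ℕ) : ZMod p) - ((x' : ℕ) : ZMod p) ≠ 0 := by
        intro h0
        rw [sub_eq_zero, ZMod.natCast_eq_natCast_iff'] at h0
        rw [Nat.mod_eq_of_lt (x.2.trans_le htp), Nat.mod_eq_of_lt (x'.2.trans_le htp)] at h0
        exact hx (Fin.ext h0)
      set u : ZMod p := ((x : ℕ) : ZMod p) with hu
      set v : ZMod p := ((x' : ℕ) : ZMod p) with hv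
      refine ⟨Sum.inl (y - (y - y') / (u - v) * u, (y - y') / (u - v)), ?_, ?_⟩
      · simp only [Sum.elim_inl, Set.mem_ofPred_eq, ← hu, ← hv]
        constructor
        · ring
        · field_simp
          ring
      · rintro (⟨a, b⟩ | ⟨i, j'⟩) hz
        · simp only [Sum.elim_inl, Set.mem_ofPred_eq, ← hu, ← hv] at hz
          obtain ⟨h1, h2⟩ := hz
          have hb : b = (y - y') / (u - v) := by
            rw [eq_div_iff hd, h1, h2]
            ring
          rw [← hb]
          simp [h1]
        · simp at hz
          exact absurd (hz.1.1.trans hz.2.1.symm) hx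

theorem step {n p t k M : ℕ} (hp : p.Prime) (htp : t ≤ p) (htk : t ≤ k) (hn : n ≤ t * p)
    (h : CliquePartition (Fin p) k M) : CliquePartition (Fin n) k (p ^ 2 + t * M) := by
  have : Fact p.Prime := ⟨hp⟩
  have e : ZMod p ≃ Fin p := Fintype.equivFinOfCardEq (ZMod.card p)
  have h2 := transversal htp htk (h.comap e e.injective)
  have e2 : Fin t × ZMod p ≃ Fin (t * p) := Fintype.equivFinOfCardEq (by simp [ZMod.card])
  exact h2.comap (fun i => e2.symm (Fin.castLE hn i))
    (e2.symm.injective.comp (Fin.castLE_injective hn))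

theorem of_sparse {n k : ℕ} (hn : 0 < n) (hk : 4 ≤ k) (h : 16 * n ≤ k ^ 2) :
    CliquePartition (Fin n) k (32 * n) := by
  obtain ⟨p, hp, h1, h2⟩ := Nat.exists_prime_lt_and_le_two_mul (Nat.sqrt n + 1) (by omega)
  have hs : Nat.sqrt n * Nat.sqrt n ≤ n := Nat.sqrt_le n
  have hs' : n < (Nat.sqrt n + 1) * (Nat.sqrt n + 1) := Nat.lt_succ_sqrt n
  have hs1 : 1 ≤ Nat.sqrt n := Nat.sqrt_pos.2 hn
  set s := Nat.sqrt n
  have hsk : 4 * s ≤ k := by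
    by_contra hc
    nlinarith
  have h3 := step (n := n) hp le_rfl (by omega : p ≤ k) (by nlinarith) (single (by omega : p ≤ k))
  obtain ⟨ι, i1, B, hm, hr⟩ := h3
  exact ⟨ι, i1, B, hm.trans (by nlinarith), hr⟩

theorem of_dense {k : ℕ} (hk : 2048 ≤ k) (n : ℕ) (h : k ^ 2 < 16 * n) :
    ∃ m, CliquePartition (Fin n) k m ∧ m * k ^ 2 ≤ 20000 * n ^ 2 := by
  induction n using Nat.strong_induction_on with
  | _ n ih =>
  have hkn : k ≤ n := by nlinarith
  obtain ⟨p, hp, h1, h2⟩ := Nat.exists_prime_lt_and_le_two_mul (max (n / k + 1) k) (by omega)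
  have hq : n < k * (n / k + 1) := Nat.lt_mul_div_succ n (by omega)
  have hq' : n / k * k ≤ n := Nat.div_mul_le_self n k
  have hkp : k ≤ p := by omega
  have hn : n ≤ k * p := hq.le.trans (Nat.mul_le_mul_left k (by omega))
  have hpk : p * k ≤ 32 * n := by
    rcases le_total (n / k + 1) k with hc | hc
    · rw [max_eq_right hc] at h2
      nlinarith
    · rw [max_eq_left hc] at h2
      nlinarith
  have hpk2 : (p * k) ^ 2 ≤ 1024 * n ^ 2 := by nlinarith
  by_cases hc : 16 * p ≤ k ^ 2
  · refine ⟨_, step hp hkp le_rfl hn (of_sparse hp.pos (by omega) hc), ?_⟩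
    have : (p * k) * k ^ 2 ≤ (32 * n) * (16 * n) := Nat.mul_le_mul hpk h.le
    nlinarith
  · have hpn : p < n := by nlinarith
    obtain ⟨M, hM, hMb⟩ := ih p hpn (by omega)
    refine ⟨_, step hp hkp le_rfl hn hM, ?_⟩
    -- The column term gains a factor `1 / k ≤ 1 / 2048`, which halves the constant `20000`.
    have h5 : k * M * k ^ 2 * k ≤ 20000 * (1024 * n ^ 2) := by nlinarith
    have h6 : (k * M * k ^ 2) * 2048 ≤ 20000 * (1024 * n ^ 2) :=
      (Nat.mul_le_mul_left _ hk).trans (by nlinarith)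
    nlinarith

theorem minCliquePartition_le {n k m : ℕ} (h : CliquePartition (Fin n) k m) :
    minCliquePartition n k ≤ m := by
  classical
  obtain ⟨ι, _, B, hm, hk, hB⟩ := h
  refine le_trans (Nat.sInf_le ?_) hm
  let e := Fintype.equivFin ι
  refine ⟨fun i => (B (e.symm i)).toFinset, fun i => ?_, fun p hp => ?_⟩
  · rw [← Set.ncard_eq_toFinset_card']
    exact hk _
  · obtain ⟨x, y, hxy, rfl⟩ := Finset.card_eq_two.1 hp
    obtain ⟨i, hi, hu⟩ := hB x y hxy
    refine ⟨e i, by simpa [Set.insert_subset_iff] using hi, fun j hj => ?_⟩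
    rw [← hu (e.symm j) (by simpa [Set.insert_subset_iff] using hj)]
    simp

end CliquePartition

theorem sq_le_mul_of_partition {n k m : ℕ} (hk : 2 ≤ k) (hkn : k < n) (B : Fin m → Finset (Fin n))
    (hB : ∀ i, (B i).card ≤ k) (hu : ∀ p : Finset (Fin n), p.card = 2 → ∃! i, p ⊆ B i) :
    n ^ 2 ≤ m * k ^ 2 := by
  have hsub : (Finset.univ : Finset (Fin n)).offDiag ⊆
      Finset.univ.biUnion fun i => (B i).offDiag := by
    rintro ⟨x, y⟩ hxy
    simp at hxy
    obtain ⟨i, hi, -⟩ := hu {x, y} (Finset.card_pair hxy)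
    simp [Finset.insert_subset_iff] at hi
    simp [hxy]
    exact ⟨i, hi⟩
  have h1 := Finset.card_le_card hsub
  have h2 : (Finset.univ.biUnion fun i => (B i).offDiag).card ≤
      (Finset.univ : Finset (Fin m)).card * (k * (k - 1)) := by
    refine Finset.card_biUnion_le_card_mul _ _ _ fun i _ => ?_
    rw [Finset.offDiag_card, ← Nat.mul_sub_one]
    exact Nat.mul_le_mul (hB i) (Nat.sub_le_sub_right (hB i) 1)
  rw [Finset.offDiag_card, ← Nat.mul_sub_one] at h1
  simp only [Finset.card_univ, Fintype.card_fin] at h1 h2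
  obtain ⟨a, rfl⟩ : ∃ a, k = a + 1 := ⟨k - 1, by omega⟩
  obtain ⟨b, rfl⟩ : ∃ b, n = b + 1 := ⟨n - 1, by omega⟩
  simp only [Nat.add_sub_cancel] at h1 h2
  have h3 := h1.trans h2
  have h4 : (b + 1) * a ≤ b * (a + 1) := by nlinarith
  have h5 : (b + 1) ^ 2 * a ≤ m * (a + 1) ^ 2 * a := by
    calc (b + 1) ^ 2 * a = (b + 1) * ((b + 1) * a) := by ring
      _ ≤ (b + 1) * (b * (a + 1)) := Nat.mul_le_mul_left _ h4
      _ = ((b + 1) * b) * (a + 1) := by ring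
      _ ≤ (m * ((a + 1) * a)) * (a + 1) := Nat.mul_le_mul_right _ h3
      _ = _ := by ring
  exact Nat.le_of_mul_le_mul_right h5 (by omega)

/-- The de Bruijn–Erdős inequality, applied to the blocks with at least two vertices. -/
theorem le_of_partition {n k m : ℕ} (hk : 2 ≤ k) (hkn : k < n) (B : Fin m → Finset (Fin n))
    (hB : ∀ i, (B i).card ≤ k) (hu : ∀ p : Finset (Fin n), p.card = 2 → ∃! i, p ⊆ B i) :
    n ≤ m := by
  classical
  let L := {i : Fin m // 2 ≤ (B i).card}
  let _ : Membership (Fin n) L := ⟨fun l x => x ∈ B l.1⟩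
  have hmem : ∀ (x : Fin n) (l : L), x ∈ l ↔ x ∈ B l.1 := fun _ _ => Iff.rfl
  have hline : ∀ x y : Fin n, x ≠ y → ∃ l : L, x ∈ l ∧ y ∈ l := by
    intro x y hxy
    obtain ⟨i, hi, -⟩ := hu {x, y} (Finset.card_pair hxy)
    refine ⟨⟨i, ?_⟩, ?_⟩
    · rw [← Finset.card_pair hxy]
      exact Finset.card_le_card hi
    · simpa [Finset.insert_subset_iff, hmem] using hi
  have huniq : ∀ (x y : Fin n) (l l' : L), x ≠ y → x ∈ l → y ∈ l → x ∈ l' → y ∈ l' → l = l' := by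
    intro x y l l' hxy h1 h2 h3 h4
    refine Subtype.ext ((hu {x, y} (Finset.card_pair hxy)).unique ?_ ?_)
    · simpa [Finset.insert_subset_iff] using ⟨h1, h2⟩
    · simpa [Finset.insert_subset_iff] using ⟨h3, h4⟩
  have hpt : ∀ l : L, ∃ x : Fin n, x ∉ l := by
    intro l
    by_contra! hc
    have h1 : B l.1 = Finset.univ := Finset.eq_univ_iff_forall.2 hc
    have h2 := hB l.1
    rw [h1, Finset.card_univ, Fintype.card_fin] at h2
    omega
  have : Configuration.Nondegenerate (Fin n) L :=
    { exists_point := hpt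
      exists_line := by
        intro x
        by_contra! hc
        have : Nontrivial (Fin n) := Fin.nontrivial_iff_two_le.2 (by omega)
        obtain ⟨y, hy⟩ := exists_ne x
        obtain ⟨l, -, hyl⟩ := hline x y hy.symm
        obtain ⟨z, hz⟩ := hpt l
        obtain ⟨l', hy', hz'⟩ := hline y z (fun h => hz (h ▸ hyl))
        exact hz (huniq x y l' l hy.symm (hc l') hy' (hc l) hyl ▸ hz')
      eq_or_eq := by
        intro x y l l' h1 h2 h3 h4
        by_cases hxy : x = y
        · exact Or.inl hxy
        · exact Or.inr (huniq x y l l' hxy h1 h2 h3 h4) }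
  choose f hf using hline
  let _ : Configuration.HasLines (Fin n) L :=
    { mkLine := fun {x y} h => f x y h
      mkLine_ax := fun {x y} h => hf x y h }
  have h := Configuration.HasLines.card_le (Fin n) L
  rw [Fintype.card_fin] at h
  exact h.trans ((Fintype.card_subtype_le _).trans (by simp))

theorem exists_partition_minCliquePartition (n : ℕ) {k : ℕ} (hk : 2 ≤ k) :
    ∃ B : Fin (minCliquePartition n k) → Finset (Fin n), (∀ i, (B i).card ≤ k) ∧
      ∀ p : Finset (Fin n), p.card = 2 → ∃! i, p ⊆ B i := by
  classical
  refine Nat.sInf_mem (s := { m : ℕ | ∃ B : Fin m → Finset (Fin n),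
    (∀ i, (B i).card ≤ k) ∧ ∀ p : Finset (Fin n), p.card = 2 → ∃! i, p ⊆ B i }) ?_
  obtain ⟨e⟩ : Nonempty ({p : Finset (Fin n) // p.card = 2} ≃ Fin (Fintype.card _)) :=
    ⟨Fintype.equivFin _⟩
  refine ⟨_, fun i => (e.symm i).1, fun i => (e.symm i).2.le.trans hk, fun p hp => ?_⟩
  refine ⟨e ⟨p, hp⟩, by simp, fun j hj => ?_⟩
  have h := Finset.eq_of_subset_of_card_le hj ((e.symm j).2.le.trans hp.ge)
  rw [← e.apply_symm_apply j]
  exact congrArg e (Subtype.ext h.symm)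

theorem clique_partition_number_bounds :
    ∃ c C : ℝ, 0 < c ∧ 0 < C ∧ ∀ n k : ℕ, 2 ≤ k → k < n →
      c * max (((n : ℝ) / (k : ℝ)) ^ 2) (n : ℝ) ≤ (minCliquePartition n k : ℝ) ∧
      (minCliquePartition n k : ℝ) ≤ C * max (((n : ℝ) / (k : ℝ)) ^ 2) (n : ℝ) := by
  refine ⟨1, 2048 ^ 2, one_pos, by positivity, fun n k hk hkn => ?_⟩
  have hk0 : (0 : ℝ) < (k : ℝ) ^ 2 := by
    have : (0 : ℝ) < k := by exact_mod_cast (by omega : 0 < k)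
    positivity
  constructor
  · obtain ⟨B, hB, hu⟩ := exists_partition_minCliquePartition n hk
    rw [one_mul]
    refine max_le ?_ ?_
    · rw [div_pow, div_le_iff₀ hk0]
      exact_mod_cast sq_le_mul_of_partition hk hkn B hB hu
    · exact_mod_cast le_of_partition hk hkn B hB hu
  · have key : ∀ m : ℕ, CliquePartition (Fin n) k m → m * k ^ 2 ≤ 2048 ^ 2 * n ^ 2 →
        (minCliquePartition n k : ℝ) ≤ 2048 ^ 2 * max (((n : ℝ) / (k : ℝ)) ^ 2) (n : ℝ) := by
      intro m hm hmk
      have h1 : (minCliquePartition n k : ℝ) ≤ m := by exact_mod_cast hm.minCliquePartition_le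
      have h2 : (m : ℝ) ≤ 2048 ^ 2 * ((n : ℝ) / (k : ℝ)) ^ 2 := by
        rw [div_pow, ← mul_div_assoc, le_div_iff₀ hk0]
        exact_mod_cast hmk
      exact (h1.trans h2).trans (mul_le_mul_of_nonneg_left (le_max_left _ _) (by positivity))
    rcases lt_or_ge k 2048 with hs | hl
    · exact key _ (CliquePartition.edges n hk) (by
        rw [← sq, mul_comm]
        exact Nat.mul_le_mul_right _ (Nat.pow_le_pow_left hs.le 2))
    · rcases le_or_gt (16 * n) (k ^ 2) with h | h
      · have h1 : (minCliquePartition n k : ℝ) ≤ 32 * n := by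
          exact_mod_cast (CliquePartition.of_sparse (by omega) (by omega) h).minCliquePartition_le
        have h2 := le_max_right (((n : ℝ) / (k : ℝ)) ^ 2) (n : ℝ)
        have h3 : (0 : ℝ) ≤ n := Nat.cast_nonneg n
        linarith
      · obtain ⟨m, hm, hmb⟩ := CliquePartition.of_dense hl n h
        exact key m hm (hmb.trans (Nat.mul_le_mul_right _ (by norm_num)))
end

section
/- Let n ≥ 4 and k ≥ 2 be integers and c > 0 a real number. Suppose B_1, …, B_m are subsets of an n-element set V, each of size at most k, such that every 2-element subset of V is contained in exactly one B_i, and suppose m ≤ c·n²/k². Set ε = 1/(2√c). Then the number of 2-element subsets of V that are contained in some block B_i with |B_i| > ε·k is at least n²/4. -/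
/-!
Call a block small when its size is at most `ε * k`. A small block contains at most `(ε * k) ^ 2 / 2`
pairs, and `ε ^ 2 = 1 / (4 * c)`, so the at most `c * n ^ 2 / k ^ 2` small blocks together contain at
most `n ^ 2 / 8` pairs. Every pair lies in some block, so at least
`n * (n - 1) / 2 - n ^ 2 / 8` pairs lie in large blocks; this is at least `n ^ 2 / 4` because
`n ≥ 4`.
-/

open scoped Classical in
/-- In a clique partition of `K_n` into at most `c·n²/k²` blocks, each of size at most `k`,
at least `n²/4` of the 2-element vertex subsets (edges) lie in a block of size
greater than `ε·k`, where `ε = 1/(2√c)`. -/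
theorem edges_in_large_blocks (n k m : ℕ) (c : ℝ) (hn : 4 ≤ n) (hk : 2 ≤ k) (hc : 0 < c)
    (B : Fin m → Finset (Fin n))
    (hcard : ∀ i, (B i).card ≤ k)
    (hpart : ∀ p : Finset (Fin n), p.card = 2 → ∃! i, p ⊆ B i)
    (hm : (m : ℝ) ≤ c * (n : ℝ) ^ 2 / (k : ℝ) ^ 2) :
    (n : ℝ) ^ 2 / 4 ≤
      (((Finset.univ : Finset (Fin n)).powersetCard 2).filter
        (fun p => ∃ i, p ⊆ B i ∧ (1 / (2 * Real.sqrt c)) * (k : ℝ) < ((B i).card : ℝ))).card := by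
  set ε : ℝ := 1 / (2 * Real.sqrt c) with hε
  set E := (Finset.univ : Finset (Fin n)).powersetCard 2 with hE
  set P : Finset (Fin n) → Prop := fun p => ∃ i, p ⊆ B i ∧ ε * (k : ℝ) < ((B i).card : ℝ) with hP
  have hk0 : (0 : ℝ) < k := by exact_mod_cast (by omega : 0 < k)
  have hn4 : (4 : ℝ) ≤ n := by exact_mod_cast hn
  have hε2 : ε ^ 2 = 1 / (4 * c) := by
    rw [hε, div_pow, mul_pow, Real.sq_sqrt hc.le]; norm_num
  have hEcard : (E.card : ℝ) = n * (n - 1) / 2 := by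
    rw [hE, Finset.card_powersetCard, Finset.card_univ, Fintype.card_fin, Nat.cast_choose_two]
  have hsplit : ((E.filter P).card : ℝ) + ((E.filter fun p => ¬ P p).card : ℝ) = E.card := by
    exact_mod_cast Finset.card_filter_add_card_filter_not (s := E) P
  let S : Finset (Fin m) := Finset.univ.filter fun i => ((B i).card : ℝ) ≤ ε * k
  have hsub : (E.filter fun p => ¬ P p) ⊆ S.biUnion fun i => (B i).powersetCard 2 := by
    intro p hp
    obtain ⟨hpE, hpP⟩ := Finset.mem_filter.1 hp
    have hp2 : p.card = 2 := (Finset.mem_powersetCard.1 hpE).2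
    obtain ⟨i, hi, -⟩ := hpart p hp2
    refine Finset.mem_biUnion.2 ⟨i, Finset.mem_filter.2 ⟨Finset.mem_univ i, ?_⟩,
      Finset.mem_powersetCard.2 ⟨hi, hp2⟩⟩
    exact not_lt.1 fun h => hpP ⟨i, hi, h⟩
  have hblock : ∀ i ∈ S, (((B i).powersetCard 2).card : ℝ) ≤ (ε * k) ^ 2 / 2 := by
    intro i hi
    have hi' : ((B i).card : ℝ) ≤ ε * k := (Finset.mem_filter.1 hi).2
    rw [Finset.card_powersetCard, Nat.cast_choose_two]
    have h0 : (0 : ℝ) ≤ (B i).card := Nat.cast_nonneg _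
    nlinarith
  have hSm : (S.card : ℝ) ≤ m := by
    exact_mod_cast (Finset.card_le_univ S).trans_eq (Fintype.card_fin m)
  have hsmall : ((E.filter fun p => ¬ P p).card : ℝ) ≤ (n : ℝ) ^ 2 / 8 := by
    calc ((E.filter fun p => ¬ P p).card : ℝ)
        ≤ ∑ i ∈ S, (((B i).powersetCard 2).card : ℝ) := by
          exact_mod_cast (Finset.card_le_card hsub).trans Finset.card_biUnion_le
      _ ≤ S.card * ((ε * k) ^ 2 / 2) := by
          simpa using Finset.sum_le_sum hblock
      _ ≤ (c * (n : ℝ) ^ 2 / (k : ℝ) ^ 2) * ((ε * k) ^ 2 / 2) := by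
          gcongr
          exact hSm.trans hm
      _ = (n : ℝ) ^ 2 / 8 := by
          rw [mul_pow, hε2]
          field_simp
          norm_num
  nlinarith
end
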